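/- arXiv:1105.1529 — 2 statements merged into one kernel-verified Lean document; each statement's English description precedes it below -/
import Mathlib

section
/- (Extended rectangle rule.) Let s, t ≥ 1 and let f be an integer-valued function on ({0,…,s+1} × {0,…,t}) \ {(s+1,0)} satisfying: f(a,b) + f(a−1,b−1) = f(a−1,b)⁺ + f(a,b−1)⁺ for all 1 ≤ a ≤ s, 1 ≤ b ≤ t and for a = s+1, 2 ≤ b ≤ t; and f(s+1,1) + f(s,0) = f(s,1)⁺. Assume f(0,0) ≤ 0. Then f(s+1,t) = f(0,0)⁻ + Σ_{i=1}^{s} f(i,0)⁻ + Σ_{j=1}^{t−1} f(0,j)⁻ + f(0,t)⁺. -/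
/-!
Call the points with both coordinates positive interior. There `f` is nonnegative, so the positive
parts in the mesh relations only matter along the two coordinate axes, and the relations telescope:
first along the strip between the columns `0` and `1`, where `f (0, 0) ≤ 0` makes column `1`
nonnegative, and then from each column to the next. The missing corner `(s + 1, 0)` contributes `0`
to the last strip, and `f (s, 0)⁺ - f (s, 0) = f (s, 0)⁻` completes the sum.
-/

open Finset

theorem sum_Icc_natCast_int {M : Type*} [AddCommMonoid M] (g : ℤ → M) (a b : ℕ) :
    ∑ i ∈ Icc (a : ℤ) b, g i = ∑ i ∈ Icc a b, g i := by
  have hIcc : Icc (a : ℤ) b = (Icc a b).map Nat.castEmbedding :=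
    coe_injective (by simp [Nat.image_cast_int_Icc])
  simp only [hIcc, sum_map, Nat.castEmbedding_apply]

section MeshRelations

variable {G : Type*} [AddCommGroup G] [Lattice G] [IsOrderedAddMonoid G] {m n : ℕ}

theorem strip_eq_of_nonpos {u v : ℕ → G} (hu : u 0 ≤ 0)
    (hmesh : ∀ j ≤ n, v (j + 1) + u j = (u (j + 1))⁺ + (v j)⁺) :
    v (n + 1) = (u 0)⁻ + ∑ j ∈ Icc 1 n, (u j)⁻ + (u (n + 1))⁺ + (v 0)⁺ := by
  induction n with
  | zero =>
    calc
      v 1 = (u 1)⁺ + (v 0)⁺ - u 0 := eq_sub_of_add_eq (hmesh 0 le_rfl)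
      _ = (u 0)⁻ + ∑ j ∈ Icc 1 0, (u j)⁻ + (u 1)⁺ + (v 0)⁺ := by
        rw [negPart_of_nonpos hu, Icc_eq_empty_of_lt one_pos, sum_empty]
        abel
  | succ n ih =>
    have hv := ih fun j hj => hmesh j (by lia)
    have hv_nonneg : 0 ≤ v (n + 1) := by rw [hv]; positivity
    calc
      v (n + 2) = (u (n + 2))⁺ + (v (n + 1))⁺ - u (n + 1) :=
        eq_sub_of_add_eq (hmesh (n + 1) le_rfl)
      _ = (u (n + 2))⁺ + ((u 0)⁻ + ∑ j ∈ Icc 1 n, (u j)⁻ + (u (n + 1))⁺ + (v 0)⁺) -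
          ((u (n + 1))⁺ - (u (n + 1))⁻) := by
        rw [posPart_of_nonneg hv_nonneg, hv, posPart_sub_negPart]
      _ = (u 0)⁻ + ∑ j ∈ Icc 1 (n + 1), (u j)⁻ + (u (n + 2))⁺ + (v 0)⁺ := by
        rw [sum_Icc_succ_top (by lia)]
        abel

-- The constant `c` is `(v 0)⁺`, or `0` where the grid has no point carrying `v 0`.
theorem strip_eq_of_nonneg {u v w : ℕ → G} {c : G} (hc : 0 ≤ c) (hw : ∀ j, 0 ≤ w j)
    (hu : ∀ j ≤ n, u (j + 1) = w j + (u 0)⁺)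
    (hmesh_zero : v 1 + u 0 = (u 1)⁺ + c)
    (hmesh_succ : ∀ j < n, v (j + 2) + u (j + 1) = (u (j + 2))⁺ + (v (j + 1))⁺) :
    v (n + 1) = w n + (u 0)⁻ + c := by
  have hu_posPart (j : ℕ) (hj : j ≤ n) : (u (j + 1))⁺ = w j + (u 0)⁺ := by
    rw [hu j hj, posPart_of_nonneg (add_nonneg (hw j) (posPart_nonneg _))]
  induction n with
  | zero =>
    calc
      v 1 = (u 1)⁺ + c - u 0 := eq_sub_of_add_eq hmesh_zero
      _ = w 0 + (u 0)⁺ + c - ((u 0)⁺ - (u 0)⁻) := by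
        rw [hu_posPart 0 le_rfl, posPart_sub_negPart]
      _ = w 0 + (u 0)⁻ + c := by abel
  | succ n ih =>
    have hv : v (n + 1) = w n + (u 0)⁻ + c :=
      ih (fun j hj => hu j (by lia)) (fun j hj => hmesh_succ j (by lia))
        (fun j hj => hu_posPart j (by lia))
    have hv_nonneg : 0 ≤ v (n + 1) := by
      rw [hv]
      exact add_nonneg (add_nonneg (hw n) (negPart_nonneg _)) hc
    calc
      v (n + 2) = (u (n + 2))⁺ + (v (n + 1))⁺ - u (n + 1) :=
        eq_sub_of_add_eq (hmesh_succ n (by lia))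
      _ = w (n + 1) + (u 0)⁺ + (w n + (u 0)⁻ + c) - (w n + (u 0)⁺) := by
        rw [hu_posPart (n + 1) le_rfl, posPart_of_nonneg hv_nonneg, hv, hu n (by lia)]
      _ = w (n + 1) + (u 0)⁻ + c := by abel

theorem rectangle_rule {F : ℕ → ℕ → G} (h₀ : F 0 0 ≤ 0)
    (hmesh : ∀ a ≤ m, ∀ b ≤ n,
      F (a + 1) (b + 1) + F a b = (F a (b + 1))⁺ + (F (a + 1) b)⁺) :
    F (m + 1) (n + 1) = (F 0 0)⁻ + ∑ i ∈ Icc 1 m, (F i 0)⁻ + ∑ j ∈ Icc 1 n, (F 0 j)⁻ +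
      (F 0 (n + 1))⁺ + (F (m + 1) 0)⁺ := by
  induction m generalizing n with
  | zero =>
    rw [strip_eq_of_nonpos h₀ (hmesh 0 le_rfl), Icc_eq_empty_of_lt one_pos, sum_empty, add_zero]
  | succ m ih =>
    have hcol : ∀ j ≤ n, F (m + 1) (j + 1) = (F 0 0)⁻ + ∑ i ∈ Icc 1 m, (F i 0)⁻ +
        ∑ i ∈ Icc 1 j, (F 0 i)⁻ + (F 0 (j + 1))⁺ + (F (m + 1) 0)⁺ := fun j hj =>
      ih fun a ha b hb => hmesh a (by lia) b (by lia)
    rw [strip_eq_of_nonneg (posPart_nonneg _) (fun j => by positivity) hcol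
      (hmesh (m + 1) le_rfl 0 (by lia)) fun j hj => hmesh (m + 1) le_rfl (j + 1) (by lia),
      sum_Icc_succ_top (by lia)]
    abel

theorem extended_rectangle_rule {F : ℕ → ℕ → G} (h₀ : F 0 0 ≤ 0)
    (hmesh : ∀ a ≤ m, ∀ b ≤ n,
      F (a + 1) (b + 1) + F a b = (F a (b + 1))⁺ + (F (a + 1) b)⁺)
    (hcorner : F (m + 2) 1 + F (m + 1) 0 = (F (m + 1) 1)⁺)
    (hlast : ∀ b < n,
      F (m + 2) (b + 2) + F (m + 1) (b + 1) = (F (m + 1) (b + 2))⁺ + (F (m + 2) (b + 1))⁺) :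
    F (m + 2) (n + 1) = (F 0 0)⁻ + ∑ i ∈ Icc 1 (m + 1), (F i 0)⁻ + ∑ j ∈ Icc 1 n, (F 0 j)⁻ +
      (F 0 (n + 1))⁺ := by
  have hcol : ∀ j ≤ n, F (m + 1) (j + 1) = (F 0 0)⁻ + ∑ i ∈ Icc 1 m, (F i 0)⁻ +
      ∑ i ∈ Icc 1 j, (F 0 i)⁻ + (F 0 (j + 1))⁺ + (F (m + 1) 0)⁺ := fun j hj =>
    rectangle_rule h₀ fun a ha b hb => hmesh a ha b (hb.trans hj)
  rw [strip_eq_of_nonneg le_rfl (fun j => by positivity) hcol (by rw [hcorner, add_zero]) hlast,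
    sum_Icc_succ_top (by lia)]
  abel

end MeshRelations

theorem stmt_13_general {G : Type*} [AddCommGroup G] [Lattice G] [IsOrderedAddMonoid G]
    (s t : ℤ) (hs : 1 ≤ s) (ht : 1 ≤ t) (f : ℤ × ℤ → G)
    (hmesh : ∀ a b : ℤ, 1 ≤ a → a ≤ s → 1 ≤ b → b ≤ t →
      f (a, b) + f (a - 1, b - 1) = (f (a - 1, b))⁺ + (f (a, b - 1))⁺)
    (hmesh' : ∀ b : ℤ, 2 ≤ b → b ≤ t →
      f (s + 1, b) + f (s, b - 1) = (f (s, b))⁺ + (f (s + 1, b - 1))⁺)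
    (hmesh'' : f (s + 1, 1) + f (s, 0) = (f (s, 1))⁺)
    (hx : f (0, 0) ≤ 0) :
    f (s + 1, t) = (f (0, 0))⁻ + (∑ i ∈ Icc 1 s, (f (i, 0))⁻)
      + (∑ j ∈ Icc 1 (t - 1), (f (0, j))⁻) + (f (0, t))⁺ := by
  obtain ⟨m, rfl⟩ : ∃ m : ℕ, s = (m + 1 : ℕ) := ⟨(s - 1).toNat, by lia⟩
  obtain ⟨n, rfl⟩ : ∃ n : ℕ, t = n + 1 := ⟨(t - 1).toNat, by lia⟩
  have hsum (k : ℕ) (g : ℤ → G) : ∑ i ∈ Icc 1 (k : ℤ), g i = ∑ i ∈ Icc 1 k, g i :=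
    sum_Icc_natCast_int g 1 k
  have key := extended_rectangle_rule (m := m) (n := n) (F := fun a b => f (a, b)) hx
    (fun a ha b hb => by
      simpa using hmesh (a + 1) (b + 1) (by lia) (by lia) (by lia) (by lia))
    (by simpa [add_assoc] using hmesh'')
    (fun b hb => by
      have := hmesh' (b + 2) (by lia) (by lia)
      simpa [add_assoc, add_sub_assoc] using this)
  rw [add_sub_cancel_right, hsum, hsum]
  simpa [add_assoc] using key

theorem stmt_13 (s t : ℤ) (hs : 1 ≤ s) (ht : 1 ≤ t) (f : ℤ × ℤ → ℤ)
    (hmesh : ∀ a b : ℤ, 1 ≤ a → a ≤ s → 1 ≤ b → b ≤ t →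
      f (a, b) + f (a - 1, b - 1) = max (f (a - 1, b)) 0 + max (f (a, b - 1)) 0)
    (hmesh' : ∀ b : ℤ, 2 ≤ b → b ≤ t →
      f (s + 1, b) + f (s, b - 1) = max (f (s, b)) 0 + max (f (s + 1, b - 1)) 0)
    (hmesh'' : f (s + 1, 1) + f (s, 0) = max (f (s, 1)) 0)
    (hx : f (0, 0) ≤ 0) :
    f (s + 1, t) = max (-f (0, 0)) 0
      + (∑ i ∈ Finset.Icc 1 s, max (-f (i, 0)) 0)
      + (∑ j ∈ Finset.Icc 1 (t - 1), max (-f (0, j)) 0) + max (f (0, t)) 0 :=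
  stmt_13_general s t hs ht f hmesh hmesh' hmesh'' hx
end

section
/- (Double extended rectangle rule.) Let s, t ≥ 1 and let f be an integer-valued function on ({0,…,s+1} × {0,…,t+1}) \ {(s+1,0), (0,t+1)} satisfying: f(a,b) + f(a−1,b−1) = f(a−1,b)⁺ + f(a,b−1)⁺ for all 1 ≤ a ≤ s, 1 ≤ b ≤ t, for a = s+1 with 2 ≤ b ≤ t+1, and for b = t+1 with 2 ≤ a ≤ s; together with f(s+1,1) + f(s,0) = f(s,1)⁺ and f(1,t+1) + f(0,t) = f(1,t)⁺. Assume f(0,0) ≤ 0. Then f(s+1,t+1) = f(0,0)⁻ + Σ_{i=1}^{s} f(i,0)⁻ + Σ_{j=1}^{t} f(0,j)⁻. -/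
/-!
Put the value `0` on the two missing corners `(s + 1, 0)` and `(0, t + 1)`: a mesh with a single
middle vertex becomes an ordinary mesh, and `f` is cluster-additive on the full rectangle. As
`f (0, 0) ≤ 0`, induction shows that all values at `(a, b)` with `a, b ≥ 1` are nonnegative, so that
away from the sides the mesh relation becomes additive:
`f (a, b) + f (a - 1, b - 1) = f (a - 1, b) + f (a, b - 1)`. Its solutions are sums of a function of
`a` and a function of `b`, and the two summands are found by telescoping the mesh relations along
the two sides of the rectangle.
-/

variable {G : Type*} [Lattice G] [AddCommGroup G]

/-- The contribution of the values `u 1, …, u n` along one side of a rectangle to the value of a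
cluster-additive function at its far corner: the last value enters with its positive part, all
earlier ones with their negative parts. -/
noncomputable def sideWeight (u : ℤ → G) (n : ℤ) : G := ∑ i ∈ Finset.Ico 1 n, (u i)⁻ + (u n)⁺

/-- Cluster-additivity on the rectangle `[0, m] × [0, n]`, with translation
`τ (a, b) = (a - 1, b - 1)`: the mesh relation holds at all vertices whose translate lies in the
rectangle. -/
def IsClusterAdditiveOn (f : ℤ × ℤ → G) (m n : ℤ) : Prop :=
  ∀ a b : ℤ, 1 ≤ a → a ≤ m → 1 ≤ b → b ≤ n →
    f (a, b) + f (a - 1, b - 1) = (f (a - 1, b))⁺ + (f (a, b - 1))⁺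

section SideWeight

variable (u : ℤ → G)

theorem sideWeight_one : sideWeight u 1 = (u 1)⁺ := by
  simp [sideWeight]

theorem sideWeight_nonneg [IsOrderedAddMonoid G] (n : ℤ) : 0 ≤ sideWeight u n :=
  add_nonneg (Finset.sum_nonneg fun i _ => negPart_nonneg (u i)) (posPart_nonneg (u n))

theorem sideWeight_add_one_add [AddLeftMono G] {n : ℤ} (hn : 1 ≤ n) :
    sideWeight u (n + 1) + u n = sideWeight u n + (u (n + 1))⁺ := by
  have hsum : ∑ i ∈ Finset.Ico 1 (n + 1), (u i)⁻ = (u n)⁻ + ∑ i ∈ Finset.Ico 1 n, (u i)⁻ := by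
    rw [← Finset.insert_Ico_right_eq_Ico_add_one hn,
      Finset.sum_insert Finset.right_notMem_Ico]
  rw [sideWeight, sideWeight, hsum]
  linear_combination (norm := abel) -posPart_sub_negPart (u n)

theorem sideWeight_add_one_of_eq_zero {n : ℤ} (hu : u (n + 1) = 0) :
    sideWeight u (n + 1) = ∑ i ∈ Finset.Icc 1 n, (u i)⁻ := by
  rw [sideWeight, hu, posPart_zero, add_zero, Finset.Ico_add_one_right_eq_Icc]

end SideWeight

namespace IsClusterAdditiveOn

variable {f : ℤ × ℤ → G} {m n : ℤ}

theorem mesh_add_one (hf : IsClusterAdditiveOn f m n) {a b : ℤ} (ha : 0 ≤ a) (ham : a + 1 ≤ m)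
    (hb : 0 ≤ b) (hbn : b + 1 ≤ n) :
    f (a + 1, b + 1) + f (a, b) = (f (a, b + 1))⁺ + (f (a + 1, b))⁺ := by
  simpa only [add_sub_cancel_right] using hf (a + 1) (b + 1) (by lia) ham (by lia) hbn

theorem comp_swap (hf : IsClusterAdditiveOn f m n) : IsClusterAdditiveOn (f ∘ Prod.swap) n m :=
  fun a b ha han hb hbm => (hf b a hb hbm ha han).trans (add_comm _ _)

variable [IsOrderedAddMonoid G]

theorem apply_one_right (hf : IsClusterAdditiveOn f m n) (h0 : f (0, 0) ≤ 0) (hn : 1 ≤ n) {a : ℤ}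
    (ha : 1 ≤ a) (ham : a ≤ m) :
    f (a, 1) = -f (0, 0) + sideWeight (fun i => f (i, 0)) a + (f (0, 1))⁺ := by
  induction a, ha using Int.leInduction with
  | base =>
    have hmesh := hf.mesh_add_one le_rfl (by simpa using ham) le_rfl (by simpa using hn)
    rw [sideWeight_one]
    simp only [zero_add] at hmesh
    linear_combination (norm := abel) hmesh
  | succ a ha ih =>
    have hfa := ih (by lia)
    have hnonneg : 0 ≤ f (a, 1) := by
      rw [hfa]
      exact add_nonneg (add_nonneg (neg_nonneg.2 h0) (sideWeight_nonneg _ a)) (posPart_nonneg _)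
    have hmesh := hf.mesh_add_one (by lia) ham le_rfl (by simpa using hn)
    rw [zero_add, posPart_of_nonneg hnonneg] at hmesh
    linear_combination (norm := abel)
      hmesh + hfa - sideWeight_add_one_add (fun i => f (i, 0)) ha

theorem apply_one_left (hf : IsClusterAdditiveOn f m n) (h0 : f (0, 0) ≤ 0) (hm : 1 ≤ m) {b : ℤ}
    (hb : 1 ≤ b) (hbn : b ≤ n) :
    f (1, b) = -f (0, 0) + (f (1, 0))⁺ + sideWeight (fun j => f (0, j)) b :=
  (hf.comp_swap.apply_one_right h0 hm hb hbn).trans (add_right_comm _ _ _)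

theorem rectangle_rule (hf : IsClusterAdditiveOn f m n) (h0 : f (0, 0) ≤ 0) {a b : ℤ}
    (ha : 1 ≤ a) (ham : a ≤ m) (hb : 1 ≤ b) (hbn : b ≤ n) :
    f (a, b) =
      -f (0, 0) + sideWeight (fun i => f (i, 0)) a + sideWeight (fun j => f (0, j)) b := by
  have hnonneg (a b : ℤ) : 0 ≤
      -f (0, 0) + sideWeight (fun i => f (i, 0)) a + sideWeight (fun j => f (0, j)) b :=
    add_nonneg (add_nonneg (neg_nonneg.2 h0) (sideWeight_nonneg _ a)) (sideWeight_nonneg _ b)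
  induction b, hb using Int.leInduction generalizing a with
  | base => rw [hf.apply_one_right h0 hbn ha ham, sideWeight_one]
  | succ b hb ihb =>
    induction a, ha using Int.leInduction with
    | base => rw [hf.apply_one_left h0 ham (by lia) hbn, sideWeight_one]
    | succ a ha iha =>
      have hupper := iha (by lia)
      have hright := ihb (a := a + 1) (by lia) ham (by lia)
      have hdiag := ihb ha (by lia) (by lia)
      have hmesh := hf.mesh_add_one (by lia) ham (by lia) hbn
      rw [posPart_of_nonneg (hupper ▸ hnonneg a (b + 1)),
        posPart_of_nonneg (hright ▸ hnonneg (a + 1) b)] at hmesh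
      linear_combination (norm := abel) hmesh + hupper + hright - hdiag

theorem corner_eq_sum_negPart {s t : ℤ} (hs : 0 ≤ s) (ht : 0 ≤ t)
    (hf : IsClusterAdditiveOn f (s + 1) (t + 1)) (h0 : f (0, 0) ≤ 0)
    (hright : f (s + 1, 0) = 0) (htop : f (0, t + 1) = 0) :
    f (s + 1, t + 1) = (f (0, 0))⁻ + ∑ i ∈ Finset.Icc 1 s, (f (i, 0))⁻
      + ∑ j ∈ Finset.Icc 1 t, (f (0, j))⁻ := by
  rw [hf.rectangle_rule h0 (by lia) le_rfl (by lia) le_rfl,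
    sideWeight_add_one_of_eq_zero _ hright, sideWeight_add_one_of_eq_zero _ htop,
    negPart_of_nonpos h0]

end IsClusterAdditiveOn

section ZeroExtension

variable {M : Type*} [Zero M] (s t : ℤ) (f : ℤ × ℤ → M)

/-- The function `f` with the values at the corners `(s + 1, 0)` and `(0, t + 1)` replaced by `0`;
these two vertices are missing from the double extended rectangle. -/
def zeroCorners : ℤ × ℤ → M :=
  Function.update (Function.update f (s + 1, 0) 0) (0, t + 1) 0

theorem zeroCorners_right (hs : 0 ≤ s) : zeroCorners s t f (s + 1, 0) = 0 := by
  have : s + 1 ≠ 0 := by lia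
  simp [zeroCorners, this]

theorem zeroCorners_top : zeroCorners s t f (0, t + 1) = 0 :=
  Function.update_self ..

variable {s t}

theorem zeroCorners_of_ne {a b : ℤ} (hright : ¬(a = s + 1 ∧ b = 0)) (htop : ¬(a = 0 ∧ b = t + 1)) :
    zeroCorners s t f (a, b) = f (a, b) := by
  simp [zeroCorners, hright, htop]

end ZeroExtension

theorem isClusterAdditiveOn_zeroCorners {s t : ℤ} (hs : 1 ≤ s) {f : ℤ × ℤ → G}
    (hmesh : IsClusterAdditiveOn f s t)
    (hmeshR : ∀ b : ℤ, 2 ≤ b → b ≤ t + 1 →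
      f (s + 1, b) + f (s, b - 1) = (f (s, b))⁺ + (f (s + 1, b - 1))⁺)
    (hmeshT : ∀ a : ℤ, 2 ≤ a → a ≤ s →
      f (a, t + 1) + f (a - 1, t) = (f (a - 1, t + 1))⁺ + (f (a, t))⁺)
    (hcornR : f (s + 1, 1) + f (s, 0) = (f (s, 1))⁺)
    (hcornT : f (1, t + 1) + f (0, t) = (f (1, t))⁺) :
    IsClusterAdditiveOn (zeroCorners s t f) (s + 1) (t + 1) := by
  intro a b ha has hb hbt
  rw [zeroCorners_of_ne f (by lia) (by lia),
    zeroCorners_of_ne f (a := a - 1) (b := b - 1) (by lia) (by lia)]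
  by_cases hR : a = s + 1 ∧ b = 1
  · obtain ⟨rfl, rfl⟩ := hR
    rw [zeroCorners_of_ne f (by lia) (by lia), sub_self, zeroCorners_right s t f (by lia)]
    simpa using hcornR
  by_cases hT : a = 1 ∧ b = t + 1
  · obtain ⟨rfl, rfl⟩ := hT
    rw [sub_self, zeroCorners_top, zeroCorners_of_ne f (by lia) (by lia)]
    simpa using hcornT
  rw [zeroCorners_of_ne f (by lia) (by lia), zeroCorners_of_ne f (by lia) (by lia)]
  rcases has.lt_or_eq with has | rfl
  · rcases hbt.lt_or_eq with hbt | rfl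
    · exact hmesh a b ha (by lia) hb (by lia)
    · simpa using hmeshT a (by lia) (by lia)
  · simpa using hmeshR b (by lia) hbt

theorem stmt_14_general [IsOrderedAddMonoid G] (s t : ℤ) (hs : 1 ≤ s) (ht : 1 ≤ t)
    (f : ℤ × ℤ → G) (hmesh : IsClusterAdditiveOn f s t)
    (hmeshR : ∀ b : ℤ, 2 ≤ b → b ≤ t + 1 →
      f (s + 1, b) + f (s, b - 1) = (f (s, b))⁺ + (f (s + 1, b - 1))⁺)
    (hmeshT : ∀ a : ℤ, 2 ≤ a → a ≤ s →
      f (a, t + 1) + f (a - 1, t) = (f (a - 1, t + 1))⁺ + (f (a, t))⁺)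
    (hcornR : f (s + 1, 1) + f (s, 0) = (f (s, 1))⁺)
    (hcornT : f (1, t + 1) + f (0, t) = (f (1, t))⁺)
    (hx : f (0, 0) ≤ 0) :
    f (s + 1, t + 1) = (f (0, 0))⁻
      + (∑ i ∈ Finset.Icc 1 s, (f (i, 0))⁻)
      + (∑ j ∈ Finset.Icc 1 t, (f (0, j))⁻) := by
  have hbottom (i : ℤ) (hi : i ≤ s) : zeroCorners s t f (i, 0) = f (i, 0) :=
    zeroCorners_of_ne f (by lia) (by lia)
  have hleft (j : ℤ) (hj : j ≤ t) : zeroCorners s t f (0, j) = f (0, j) :=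
    zeroCorners_of_ne f (by lia) (by lia)
  have hzero : IsClusterAdditiveOn (zeroCorners s t f) (s + 1) (t + 1) :=
    isClusterAdditiveOn_zeroCorners hs hmesh hmeshR hmeshT hcornR hcornT
  have hrule := hzero.corner_eq_sum_negPart (by lia) (by lia) (by rwa [hbottom 0 (by lia)])
    (zeroCorners_right s t f (by lia)) (zeroCorners_top s t f)
  rw [zeroCorners_of_ne f (by lia) (by lia), hbottom 0 (by lia)] at hrule
  rw [hrule, Finset.sum_congr rfl fun i hi => congrArg _ (hbottom i (Finset.mem_Icc.1 hi).2),
    Finset.sum_congr rfl fun j hj => congrArg _ (hleft j (Finset.mem_Icc.1 hj).2)]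

theorem stmt_14 (s t : ℤ) (hs : 1 ≤ s) (ht : 1 ≤ t) (f : ℤ × ℤ → ℤ)
    (hmesh : ∀ a b : ℤ, 1 ≤ a → a ≤ s → 1 ≤ b → b ≤ t →
      f (a, b) + f (a - 1, b - 1) = max (f (a - 1, b)) 0 + max (f (a, b - 1)) 0)
    (hmeshR : ∀ b : ℤ, 2 ≤ b → b ≤ t + 1 →
      f (s + 1, b) + f (s, b - 1) = max (f (s, b)) 0 + max (f (s + 1, b - 1)) 0)
    (hmeshT : ∀ a : ℤ, 2 ≤ a → a ≤ s →
      f (a, t + 1) + f (a - 1, t) = max (f (a - 1, t + 1)) 0 + max (f (a, t)) 0)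
    (hcornR : f (s + 1, 1) + f (s, 0) = max (f (s, 1)) 0)
    (hcornT : f (1, t + 1) + f (0, t) = max (f (1, t)) 0)
    (hx : f (0, 0) ≤ 0) :
    f (s + 1, t + 1) = max (-f (0, 0)) 0
      + (∑ i ∈ Finset.Icc 1 s, max (-f (i, 0)) 0)
      + (∑ j ∈ Finset.Icc 1 t, max (-f (0, j)) 0) :=
  stmt_14_general s t hs ht f hmesh hmeshR hmeshT hcornR hcornT hx
end
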